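/- arXiv:1205.5134 — 3 statements merged into one kernel-verified Lean document; each statement's English description precedes it below -/
import Mathlib

section
/- Let K be a field, n ≥ 1, and let σ, τ be ring automorphisms of K such that σ∘τ = τ∘σ and σⁿ = id. Let γ, θ ∈ K satisfy σ(γ) = γ, τ(γ) = γ and σ(θ) = θ. Assume that every nonzero element of D is an invertible matrix (i.e., the cyclic algebra is division). Then the following are equivalent: (i) every nonzero matrix α_θ(X,Y) with X, Y ∈ D is invertible; (ii) for every Z ∈ D, Z·τ(Z) ≠ θ·Iₙ, where Iₙ is the n×n identity matrix. -/
open Matrix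

noncomputable section

/-- The matrix `Γ` of the left-regular representation of the generator `e` of the
cyclic algebra `(K/F, σ, γ)`: the `(i+1, i)` entries are `1`, the `(0, n-1)` entry is `γ`. -/
def Gam (n : ℕ) {K : Type} [Field K] (γ : K) : Matrix (Fin n) (Fin n) K :=
  Matrix.of fun i j =>
    if (i : ℕ) = (j : ℕ) + 1 then (1 : K)
    else if (i : ℕ) = 0 ∧ (j : ℕ) = n - 1 then γ else 0

/-- The image `D` of the cyclic algebra `(K/F, σ, γ)` under its left-regular representation:
matrices `∑ k, diag(c_k, σ(c_k), …, σ^{n-1}(c_k)) * Γ^k`. -/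
def cyclicRep (n : ℕ) {K : Type} [Field K] (σ : RingAut K) (γ : K) :
    Set (Matrix (Fin n) (Fin n) K) :=
  {M | ∃ c : Fin n → K,
    M = ∑ k : Fin n, Matrix.diagonal (fun i : Fin n => (σ ^ (i : ℕ)) (c k)) * (Gam n γ) ^ (k : ℕ)}

/-- The iterated construction `α_θ(X, Y) = [[X, θ·τ(Y)], [Y, τ(X)]]`. -/
def alphaTheta (n : ℕ) {K : Type} [Field K] (θ : K) (τ : RingAut K)
    (X Y : Matrix (Fin n) (Fin n) K) :
    Matrix (Fin n ⊕ Fin n) (Fin n ⊕ Fin n) K :=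
  Matrix.fromBlocks X (θ • Y.map ⇑τ) Y (X.map ⇑τ)

/-- The iterated code `A = {α_θ(X,Y) : X, Y ∈ D}`. -/
def iterCode (n : ℕ) {K : Type} [Field K] (σ τ : RingAut K) (γ θ : K) :
    Set (Matrix (Fin n ⊕ Fin n) (Fin n ⊕ Fin n) K) :=
  {M | ∃ X ∈ cyclicRep n σ γ, ∃ Y ∈ cyclicRep n σ γ, M = alphaTheta n θ τ X Y}

/-!
The cyclic algebra is a twisted centralizer: `D = {M | M * Γ = Γ * σ(M)}`. The inclusion `⊆` holds
on generators; for `⊇`, the relation determines each column of `M` from the preceding one, and the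
first column can be prescribed arbitrarily inside `D`. In this form it is evident that `D` is a
ring, stable under `τ` and under inverses taken in `M_n(K)`. When `Y` is invertible, `α_θ(X, Y)` is
invertible iff its Schur complement `θ τ(Y) - X Y⁻¹ τ(X) = (θ - Z τ(Z)) τ(Y)` is, where
`Z = X Y⁻¹`; as `D` is a division ring, this means `Z τ(Z) ≠ θ`.
-/

section TwistedCentralizer

variable {A : Type*} [Ring A] {φ ψ : A →+* A} {g x : A}

/-- The centralizer of `g` twisted by the ring endomorphism `φ`: the subring of all `x` with
`x * g = g * φ x`. It gives an intrinsic description of the cyclic algebra inside `M_n(K)`. -/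
def twistedCentralizer (φ : A →+* A) (g : A) : Subring A where
  carrier := {x | SemiconjBy g (φ x) x}
  mul_mem' {x y} hx hy := by
    simpa only [Set.mem_ofPred_eq, map_mul] using SemiconjBy.mul_right hx hy
  one_mem' := by simp only [Set.mem_ofPred_eq, map_one, SemiconjBy.one_right]
  add_mem' {x y} hx hy := by
    simpa only [Set.mem_ofPred_eq, map_add] using SemiconjBy.add_right hx hy
  zero_mem' := by simp only [Set.mem_ofPred_eq, map_zero, SemiconjBy.zero_right]
  neg_mem' {x} hx := by
    simpa only [Set.mem_ofPred_eq, map_neg] using SemiconjBy.neg_right hx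

theorem mem_twistedCentralizer : x ∈ twistedCentralizer φ g ↔ g * φ x = x * g :=
  Iff.rfl

theorem self_mem_twistedCentralizer (hg : φ g = g) : g ∈ twistedCentralizer φ g := by
  rw [mem_twistedCentralizer, hg]

theorem map_mem_twistedCentralizer (hφψ : ∀ a, φ (ψ a) = ψ (φ a)) (hg : ψ g = g)
    (hx : x ∈ twistedCentralizer φ g) : ψ x ∈ twistedCentralizer φ g := by
  rw [mem_twistedCentralizer] at hx ⊢
  simpa only [map_mul, hg, hφψ] using congrArg ψ hx

theorem units_inv_mem_twistedCentralizer {u : Aˣ} (hu : ↑u ∈ twistedCentralizer φ g) :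
    ↑u⁻¹ ∈ twistedCentralizer φ g :=
  SemiconjBy.units_inv_right (x := Units.map (φ : A →* A) u) hu

theorem smul_one_mem_twistedCentralizer {m R : Type*} [Fintype m] [DecidableEq m] [CommRing R]
    {f : R →+* R} {θ : R} (hθ : f θ = θ) (G : Matrix m m R) :
    θ • (1 : Matrix m m R) ∈ twistedCentralizer f.mapMatrix G := by
  rw [mem_twistedCentralizer, smul_one_eq_diagonal, RingHom.mapMatrix_apply,
    diagonal_map (map_zero f)]
  ext i j
  simp [hθ, mul_comm]

end TwistedCentralizer

section DivisionSubring

variable {m R : Type*} [Fintype m] [DecidableEq m] [CommRing R]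

theorem isUnit_fromBlocks_iff_of_units₂₁ (A B D : Matrix m m R) (C : (Matrix m m R)ˣ) :
    IsUnit (fromBlocks A B C D) ↔ IsUnit (B - A * C⁻¹.val * D) := by
  let : Invertible (C : Matrix m m R) := C.invertible
  rw [← isUnit_submatrix_equiv (Equiv.sumComm m m) (Equiv.refl _), Equiv.sumComm_apply,
    Equiv.coe_refl, fromBlocks_submatrix_sum_swap_left, submatrix_id_id,
    isUnit_fromBlocks_iff_of_invertible₁₁, invOf_units]

theorem isUnit_fromBlocks_mul_units_iff (φ : Matrix m m R →+* Matrix m m R) (Θ Z : Matrix m m R)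
    (u : (Matrix m m R)ˣ) :
    IsUnit (fromBlocks (Z * u.val) (Θ * φ u) u (φ (Z * u.val))) ↔ IsUnit (Θ - Z * φ Z) := by
  rw [isUnit_fromBlocks_iff_of_units₂₁, Units.mul_inv_cancel_right, map_mul, ← mul_assoc,
    ← sub_mul]
  exact Units.isUnit_mul_units _ (Units.map (φ : Matrix m m R →* Matrix m m R) u)

theorem forall_isUnit_fromBlocks_iff_forall_mul_map_ne [Nonempty m] [Nontrivial R]
    {D : Subring (Matrix m m R)} {φ : Matrix m m R →+* Matrix m m R} {Θ : Matrix m m R}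
    (hdiv : ∀ M ∈ D, M ≠ 0 → IsUnit M)
    (hinv : ∀ u : (Matrix m m R)ˣ, ↑u ∈ D → ↑u⁻¹ ∈ D) (hφ : ∀ M ∈ D, φ M ∈ D) (hΘ : Θ ∈ D) :
    (∀ X ∈ D, ∀ Y ∈ D, fromBlocks X (Θ * φ Y) Y (φ X) ≠ 0 →
        IsUnit (fromBlocks X (Θ * φ Y) Y (φ X))) ↔
      ∀ Z ∈ D, Z * φ Z ≠ Θ := by
  constructor
  · intro h Z hZ hZΘ
    have hne : fromBlocks Z (Θ * φ 1) 1 (φ Z) ≠ 0 := fun h0 =>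
      one_ne_zero (congrArg toBlocks₂₁ h0)
    have hunit : IsUnit (Θ - Z * φ Z) :=
      (isUnit_fromBlocks_mul_units_iff φ Θ Z 1).1
        (by simpa only [Units.val_one, mul_one] using h Z hZ 1 (one_mem D) hne)
    exact hunit.ne_zero (sub_eq_zero.2 hZΘ.symm)
  · intro h X hX Y hY hne
    obtain rfl | hY0 := eq_or_ne Y 0
    · have hX0 : X ≠ 0 := by
        rintro rfl
        simp at hne
      have hXu : IsUnit X := hdiv X hX hX0
      rw [map_zero, mul_zero]
      exact isUnit_fromBlocks_zero₂₁.2 ⟨hXu, hXu.map φ⟩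
    · obtain ⟨u, rfl⟩ := hdiv Y hY hY0
      obtain ⟨Z, hZ, rfl⟩ : ∃ Z ∈ D, Z * u.val = X :=
        ⟨X * u⁻¹.val, mul_mem hX (hinv u hY), Units.inv_mul_cancel_right X u⟩
      exact (isUnit_fromBlocks_mul_units_iff φ Θ Z u).2 <|
        hdiv _ (sub_mem hΘ (mul_mem hZ (hφ Z hZ))) (sub_ne_zero.2 (h Z hZ).symm)

end DivisionSubring

section CyclicAlgebra

variable {K : Type} [Field K] {n : ℕ} {σ : RingAut K} {γ : K}

theorem mapMatrix_Gam {f : K →+* K} (hf : f γ = γ) : f.mapMatrix (Gam n γ) = Gam n γ := by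
  ext i j
  simp only [RingHom.mapMatrix_apply, map_apply, Gam, of_apply]
  split_ifs <;> simp [hf]

theorem mul_Gam_apply (γ : K) (M : Matrix (Fin n) (Fin n) K) (i : Fin n) {j : ℕ}
    (hj : j + 1 < n) : (M * Gam n γ) i ⟨j, by omega⟩ = M i ⟨j + 1, hj⟩ := by
  rw [mul_apply, Finset.sum_eq_single ⟨j + 1, hj⟩]
  · simp [Gam]
  · intro l _ hl
    have hl' : (l : ℕ) ≠ j + 1 := fun h => hl (Fin.ext h)
    have hj' : j ≠ n - 1 := by omega
    simp [Gam, hl', hj']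
  · simp

theorem mul_Gam_pow_apply_zero [NeZero n] (γ : K) (M : Matrix (Fin n) (Fin n) K) (i : Fin n)
    {k : ℕ} (hk : k < n) : (M * Gam n γ ^ k) i 0 = M i ⟨k, hk⟩ := by
  induction k generalizing M with
  | zero => simp
  | succ k ih => rw [pow_succ', ← mul_assoc, ih _ (by omega), mul_Gam_apply γ M i hk]

theorem sum_diagonal_mul_Gam_pow_apply_zero [NeZero n] (σ : RingAut K) (γ : K) (c : Fin n → K)
    (i : Fin n) :
    (∑ k : Fin n, diagonal (fun i : Fin n => (σ ^ (i : ℕ)) (c k)) * Gam n γ ^ (k : ℕ)) i 0 =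
      (σ ^ (i : ℕ)) (c i) := by
  simp only [Matrix.sum_apply, mul_Gam_pow_apply_zero γ _ _ (Fin.isLt _), diagonal_apply, Fin.eta,
    Finset.sum_ite_eq, Finset.mem_univ, if_true]

theorem diagonal_mem_twistedCentralizer_Gam (hσn : σ ^ n = 1) (γ a : K) :
    diagonal (fun i : Fin n => (σ ^ (i : ℕ)) a) ∈
      twistedCentralizer (σ : K →+* K).mapMatrix (Gam n γ) := by
  rw [mem_twistedCentralizer, RingHom.mapMatrix_apply, diagonal_map (map_zero _)]
  ext i j
  have hσ_succ : σ ((σ ^ (j : ℕ)) a) = (σ ^ ((j : ℕ) + 1)) a := by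
    rw [pow_succ', RingAut.mul_apply]
  simp only [mul_diagonal, diagonal_mul, Gam, of_apply, RingHom.coe_coe, hσ_succ]
  split_ifs with hsub hcorner
  · rw [hsub, mul_comm]
  · have hj : (j : ℕ) + 1 = n := by omega
    rw [hj, hσn, hcorner.1, pow_zero, mul_comm]
  · simp

theorem eq_of_mem_twistedCentralizer_Gam [NeZero n] {f : K →+* K} {M N : Matrix (Fin n) (Fin n) K}
    (hM : M ∈ twistedCentralizer f.mapMatrix (Gam n γ))
    (hN : N ∈ twistedCentralizer f.mapMatrix (Gam n γ)) (h : ∀ i, M i 0 = N i 0) : M = N := by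
  rw [mem_twistedCentralizer] at hM hN
  suffices hcol : ∀ (j : ℕ) (hj : j < n) (i : Fin n), M i ⟨j, hj⟩ = N i ⟨j, hj⟩ from
    Matrix.ext fun i j => hcol j j.isLt i
  intro j
  induction j with
  | zero => exact fun _ => h
  | succ j ih =>
    intro hj i
    rw [← mul_Gam_apply γ M i hj, ← mul_Gam_apply γ N i hj, ← hM, ← hN]
    simp only [mul_apply, RingHom.mapMatrix_apply, map_apply, ih]

theorem mem_cyclicRep_iff_mem_twistedCentralizer [NeZero n] (hσn : σ ^ n = 1) (hσγ : σ γ = γ)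
    {M : Matrix (Fin n) (Fin n) K} :
    M ∈ cyclicRep n σ γ ↔ M ∈ twistedCentralizer (σ : K →+* K).mapMatrix (Gam n γ) := by
  have hsum (c : Fin n → K) :
      ∑ k : Fin n, diagonal (fun i : Fin n => (σ ^ (i : ℕ)) (c k)) * Gam n γ ^ (k : ℕ) ∈
        twistedCentralizer (σ : K →+* K).mapMatrix (Gam n γ) :=
    sum_mem fun k _ => mul_mem (diagonal_mem_twistedCentralizer_Gam hσn γ (c k))
      (pow_mem (self_mem_twistedCentralizer (mapMatrix_Gam hσγ)) _)
  constructor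
  · rintro ⟨c, rfl⟩
    exact hsum c
  · intro hM
    refine ⟨fun k => (σ ^ (k : ℕ)).symm (M k 0),
      eq_of_mem_twistedCentralizer_Gam hM (hsum _) fun i => ?_⟩
    rw [sum_diagonal_mul_Gam_pow_apply_zero, RingEquiv.apply_symm_apply]

theorem alphaTheta_eq_fromBlocks (θ : K) (τ : RingAut K) (X Y : Matrix (Fin n) (Fin n) K) :
    alphaTheta n θ τ X Y =
      fromBlocks X (θ • (1 : Matrix (Fin n) (Fin n) K) * (τ : K →+* K).mapMatrix Y) Y
        ((τ : K →+* K).mapMatrix X) := by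
  rw [smul_one_mul]
  rfl

end CyclicAlgebra

/-- assuming the cyclic algebra is division (every nonzero element of `D`
is invertible), the following are equivalent: (i) every nonzero `α_θ(X,Y)` with
`X, Y ∈ D` is invertible; (ii) `Z·τ(Z) ≠ θ·Iₙ` for every `Z ∈ D`. -/
theorem stmt1 {K : Type} [Field K] (n : ℕ) (hn : 1 ≤ n) (σ τ : RingAut K)
    (hcomm : σ * τ = τ * σ) (hσn : σ ^ n = 1)
    (γ θ : K) (hσγ : σ γ = γ) (hτγ : τ γ = γ) (hσθ : σ θ = θ)
    (hdiv : ∀ M ∈ cyclicRep n σ γ, M ≠ 0 → IsUnit M) :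
    (∀ X ∈ cyclicRep n σ γ, ∀ Y ∈ cyclicRep n σ γ,
        alphaTheta n θ τ X Y ≠ 0 → IsUnit (alphaTheta n θ τ X Y)) ↔
      (∀ Z ∈ cyclicRep n σ γ,
        Z * Z.map ⇑τ ≠ θ • (1 : Matrix (Fin n) (Fin n) K)) := by
  have : NeZero n := ⟨by omega⟩
  have hcomm_mapMatrix (M : Matrix (Fin n) (Fin n) K) :
      (σ : K →+* K).mapMatrix ((τ : K →+* K).mapMatrix M) =
        (τ : K →+* K).mapMatrix ((σ : K →+* K).mapMatrix M) :=
    Matrix.ext fun i j => DFunLike.congr_fun hcomm (M i j)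
  simp only [mem_cyclicRep_iff_mem_twistedCentralizer hσn hσγ] at hdiv ⊢
  simp only [alphaTheta_eq_fromBlocks]
  exact forall_isUnit_fromBlocks_iff_forall_mul_map_ne hdiv
    (fun _ => units_inv_mem_twistedCentralizer)
    (fun _ => map_mem_twistedCentralizer hcomm_mapMatrix (mapMatrix_Gam hτγ))
    (smul_one_mem_twistedCentralizer hσθ _)
end
end

section
/- Let K be a field, n ≥ 1, and let σ, τ be ring automorphisms of K such that σ∘τ = τ∘σ, σⁿ = id, and τ² = id. Let γ, θ ∈ K satisfy σ(γ) = γ, τ(γ) = γ, σ(θ) = θ and τ(θ) = θ. Assume that every nonzero element of D is an invertible matrix. Then the following are equivalent: (i) every nonzero element M of A has a two-sided inverse inside A, i.e., there exists N ∈ A with M·N = N·M = I (A is a division algebra); (ii) for every Z ∈ D, Z·τ(Z) ≠ θ·Iₙ. -/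
/-!
If `y ≠ 0`, the equations `xu + θτ(y)v = 1`, `yu + τ(x)v = 0` that express
`α_θ(x, y) α_θ(u, v) = 1` reduce to `(θτ(y) - xy⁻¹τ(x)) v = 1`. In a division ring this is solvable
unless `xy⁻¹τ(x) = θτ(y)`, that is, unless `z = xy⁻¹` satisfies `zτ(z) = θ`; for such a `z` the
equations with `x = z`, `y = 1` have no solution.

The ring `D` is a division ring as soon as its nonzero elements are invertible matrices: it is
finite-dimensional as a left `K`-vector space, hence left Artinian, so its regular elements are
units.
-/

open Matrix

noncomputable section

section DivisionRing

lemma forall_exists_mul_add_eq_one_iff {D : Type*} [DivisionRing D] (τ : D →+* D) (θ : D) :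
    (∀ x y : D, ¬(x = 0 ∧ y = 0) → ∃ u v, x * u + θ * (τ y * v) = 1 ∧ y * u + τ x * v = 0) ↔
      ∀ z, z * τ z ≠ θ := by
  constructor
  · intro H z hz
    obtain ⟨u, v, h₁, h₂⟩ := H z 1 (by simp)
    have hu : u = -(τ z * v) := eq_neg_of_add_eq_zero_left (by simpa using h₂)
    simp [hu, ← hz, mul_assoc] at h₁
  · intro H x y hxy
    by_cases hy : y = 0
    · have hx : x ≠ 0 := fun hx => hxy ⟨hx, hy⟩
      exact ⟨x⁻¹, 0, by simp [hx], by simp [hy]⟩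
    · let w := θ * τ y - x * y⁻¹ * τ x
      have hw : w ≠ 0 := by
        intro hw
        have hxy' : x * y⁻¹ * τ x = θ * τ y := (sub_eq_zero.mp hw).symm
        apply H (x * y⁻¹)
        rw [map_mul, ← mul_assoc, hxy', mul_assoc, ← map_mul, mul_inv_cancel₀ hy, map_one, mul_one]
      refine ⟨-(y⁻¹ * (τ x * w⁻¹)), w⁻¹, ?_, ?_⟩
      · calc x * -(y⁻¹ * (τ x * w⁻¹)) + θ * (τ y * w⁻¹) = w * w⁻¹ := by simp only [w]; noncomm_ring
          _ = 1 := mul_inv_cancel₀ hw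
      · rw [mul_neg, mul_inv_cancel_left₀ hy, neg_add_cancel]

end DivisionRing

section Artinian

variable {K A R : Type*} [Ring K] [Ring A] [Ring R]

lemma isArtinianRing_of_forall_eq_sum_mul [IsArtinianRing K] {ι : Type*} [Fintype ι] (δ : K →+* A)
    (b : ι → A) (hb : ∀ x, ∃ c : ι → K, ∑ k, δ (c k) * b k = x) : IsArtinianRing A := by
  let := Module.compHom A δ
  have : IsScalarTower K A A := ⟨fun a x y => mul_assoc (δ a) x y⟩
  have : Module.Finite K A := Module.Finite.of_surjective (Fintype.linearCombination K b) hb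
  exact IsArtinianRing.of_finite K A

lemma isUnit_of_map_of_injective [IsArtinianRing A] {f : A →+* R} (hf : Function.Injective f)
    {x : A} (hx : IsUnit (f x)) : IsUnit x := by
  refine IsArtinianRing.isUnit_iff_isRightRegular.mpr fun a b hab => hf (hx.mul_right_cancel ?_)
  simpa only [map_mul] using congrArg f hab

end Artinian

section CyclicGenerator

variable {K R : Type*} [Ring K] [Ring R]

/-- The defining relations of the generator `e` of the cyclic algebra `(K/F, σ, γ)`, with `K`
mapped to `R` by `δ`. The convention is `e σ(a) = a e`, which is the one satisfied by the matrix
`Γ`. -/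
structure IsCyclicGenerator (δ : K →+* R) (σ : RingAut K) (γ : K) (n : ℕ) (e : R) : Prop where
  mul_map (a : K) : e * δ (σ a) = δ a * e
  pow_eq : e ^ n = δ γ

/-- The additive subgroup of left `K`-combinations of `1, e, …, eⁿ⁻¹`, the underlying group of the
cyclic algebra. -/
def powerSpan (δ : K →+* R) (e : R) (n : ℕ) : AddSubgroup R where
  carrier := {x | ∃ c : Fin n → K, ∑ k, δ (c k) * e ^ (k : ℕ) = x}
  zero_mem' := ⟨0, by simp⟩
  add_mem' := by
    rintro _ _ ⟨c, rfl⟩ ⟨d, rfl⟩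
    exact ⟨c + d, by simp [add_mul, Finset.sum_add_distrib]⟩
  neg_mem' := by
    rintro _ ⟨c, rfl⟩
    exact ⟨-c, by simp⟩

namespace IsCyclicGenerator

variable {δ : K →+* R} {σ : RingAut K} {γ : K} {n : ℕ} {e : R}

lemma pow_mul_map (h : IsCyclicGenerator δ σ γ n e) (k : ℕ) (a : K) :
    e ^ k * δ ((σ ^ k) a) = δ a * e ^ k := by
  induction k with
  | zero => simp
  | succ k ih =>
    calc e ^ (k + 1) * δ ((σ ^ (k + 1)) a) = e ^ k * (e * δ (σ ((σ ^ k) a))) := by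
          rw [pow_succ, pow_succ', RingAut.mul_apply, mul_assoc]
      _ = δ a * e ^ (k + 1) := by rw [h.mul_map, ← mul_assoc, ih, mul_assoc, ← pow_succ]

lemma monomial_mul_monomial (h : IsCyclicGenerator δ σ γ n e) (a b : K) (i j : ℕ) :
    δ a * e ^ i * (δ b * e ^ j) = δ (a * (σ ^ i)⁻¹ b) * e ^ (i + j) := by
  have hb : e ^ i * δ b = δ ((σ ^ i)⁻¹ b) * e ^ i := by
    rw [← h.pow_mul_map, RingAut.inv_apply, RingEquiv.apply_symm_apply]
  calc δ a * e ^ i * (δ b * e ^ j) = δ a * (e ^ i * δ b) * e ^ j := by simp only [mul_assoc]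
    _ = δ (a * (σ ^ i)⁻¹ b) * e ^ (i + j) := by rw [hb, map_mul, pow_add]; simp only [mul_assoc]

variable [NeZero n]

lemma monomial_mem_powerSpan (h : IsCyclicGenerator δ σ γ n e) (a : K) (k : ℕ) :
    δ a * e ^ k ∈ powerSpan δ e n := by
  induction k using Nat.strong_induction_on generalizing a with
  | _ k ih =>
    obtain hk | hk := lt_or_ge k n
    · refine ⟨Pi.single ⟨k, hk⟩ a, ?_⟩
      rw [Fintype.sum_eq_single ⟨k, hk⟩ fun b hb => by simp [hb], Pi.single_eq_same]
    · have reduce : δ a * e ^ k = δ (a * γ) * e ^ (k - n) := by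
        rw [map_mul, ← h.pow_eq, mul_assoc, ← pow_add, Nat.add_sub_cancel' hk]
      rw [reduce]
      exact ih _ (Nat.sub_lt_of_pos_le (NeZero.pos n) hk) _

/-- The cyclic algebra generated inside `R` by the image of `K` and a cyclic generator. -/
def cyclicSubring (h : IsCyclicGenerator δ σ γ n e) : Subring R where
  __ := powerSpan δ e n
  one_mem' := by simpa using h.monomial_mem_powerSpan 1 0
  mul_mem' := by
    rintro _ _ ⟨c, rfl⟩ ⟨d, rfl⟩
    rw [Finset.sum_mul_sum]
    refine (powerSpan δ e n).sum_mem fun i _ => (powerSpan δ e n).sum_mem fun j _ => ?_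
    rw [h.monomial_mul_monomial]
    exact h.monomial_mem_powerSpan _ _

lemma monomial_mem_cyclicSubring (h : IsCyclicGenerator δ σ γ n e) (a : K) (k : ℕ) :
    δ a * e ^ k ∈ h.cyclicSubring :=
  h.monomial_mem_powerSpan a k

lemma map_mem_cyclicSubring (h : IsCyclicGenerator δ σ γ n e) (a : K) : δ a ∈ h.cyclicSubring := by
  simpa using h.monomial_mem_cyclicSubring a 0

lemma apply_mem_cyclicSubring (h : IsCyclicGenerator δ σ γ n e) {T : R →+* R} {τ : K → K}
    (hδ : ∀ a, T (δ a) = δ (τ a)) (he : T e = e) {x : R} (hx : x ∈ h.cyclicSubring) :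
    T x ∈ h.cyclicSubring := by
  obtain ⟨c, rfl⟩ := hx
  exact ⟨fun k => τ (c k), by simp only [map_sum, map_mul, map_pow, hδ, he]⟩

lemma isArtinianRing_cyclicSubring [IsArtinianRing K] (h : IsCyclicGenerator δ σ γ n e) :
    IsArtinianRing h.cyclicSubring := by
  have pow_mem (k : ℕ) : e ^ k ∈ h.cyclicSubring := by simpa using h.monomial_mem_cyclicSubring 1 k
  refine isArtinianRing_of_forall_eq_sum_mul (δ.codRestrict h.cyclicSubring h.map_mem_cyclicSubring)
    (fun k : Fin n => ⟨e ^ (k : ℕ), pow_mem k⟩) ?_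
  rintro ⟨_, c, rfl⟩
  exact ⟨c, Subtype.ext (by simp)⟩

end IsCyclicGenerator

end CyclicGenerator

section Gam

variable {K : Type} [Field K] {n : ℕ} {γ : K}

lemma Gam_mulVec_single_of_lt {j : ℕ} (hj : j + 1 < n) :
    Gam n γ *ᵥ Pi.single ⟨j, by omega⟩ 1 = Pi.single ⟨j + 1, hj⟩ 1 := by
  ext i
  have hj' : j ≠ n - 1 := by omega
  simp [Gam, Pi.single_apply, Fin.ext_iff, hj']

lemma Gam_mulVec_single_last [NeZero n] :
    Gam n γ *ᵥ Pi.single ⟨n - 1, Nat.sub_one_lt (NeZero.ne n)⟩ 1 = γ • Pi.single 0 1 := by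
  ext i
  have hi : (i : ℕ) ≠ n - 1 + 1 := by omega
  simp [Gam, Pi.single_apply, hi]

lemma Gam_pow_mulVec_single_zero [NeZero n] {k : ℕ} (hk : k < n) :
    Gam n γ ^ k *ᵥ Pi.single 0 1 = Pi.single ⟨k, hk⟩ 1 := by
  induction k with
  | zero => rw [pow_zero, one_mulVec, Fin.mk_zero']
  | succ k ih => rw [pow_succ', ← mulVec_mulVec, ih (by omega), Gam_mulVec_single_of_lt hk]

lemma Gam_pow_self [NeZero n] : Gam n γ ^ n = γ • 1 := by
  -- The first basis vector is cyclic for `Γ`, so it determines any matrix commuting with `Γ`.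
  have on_zero : Gam n γ ^ n *ᵥ Pi.single 0 1 = γ • Pi.single 0 1 := by
    have hn : n - 1 < n := Nat.sub_one_lt (NeZero.ne n)
    rw [← mul_pow_sub_one (NeZero.ne n), ← mulVec_mulVec, Gam_pow_mulVec_single_zero hn,
      Gam_mulVec_single_last]
  refine ext_of_mulVec_single fun j => ?_
  calc Gam n γ ^ n *ᵥ Pi.single j 1
      = Gam n γ ^ (j : ℕ) *ᵥ (Gam n γ ^ n *ᵥ Pi.single 0 1) := by
        rw [mulVec_mulVec, pow_mul_comm, ← mulVec_mulVec, Gam_pow_mulVec_single_zero j.is_lt]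
    _ = (γ • 1 : Matrix (Fin n) (Fin n) K) *ᵥ Pi.single j 1 := by
        rw [on_zero, mulVec_smul, Gam_pow_mulVec_single_zero j.is_lt, smul_mulVec, one_mulVec]

lemma Gam_map {τ : RingAut K} (hτγ : τ γ = γ) : (Gam n γ).map τ = Gam n γ := by
  ext i j
  simp only [Gam, map_apply, of_apply]
  split_ifs <;> simp [hτγ]

end Gam

section TwistedDiagonal

variable {K : Type*} [Ring K] (n : ℕ)

/-- The embedding `a ↦ diag(a, σ(a), …, σⁿ⁻¹(a))` through which `K` sits inside the
left-regular representation of the cyclic algebra. -/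
def twistedDiagonal (σ : RingAut K) : K →+* Matrix (Fin n) (Fin n) K :=
  (diagonalRingHom (Fin n) K).comp (RingHom.pi fun i => ((σ ^ (i : ℕ) : RingAut K) : K →+* K))

lemma twistedDiagonal_apply (σ : RingAut K) (a : K) :
    twistedDiagonal n σ a = diagonal fun i : Fin n => (σ ^ (i : ℕ)) a := rfl

lemma twistedDiagonal_of_apply_eq_self {σ : RingAut K} {a : K} (ha : σ a = a) :
    twistedDiagonal n σ a = a • 1 := by
  have fixed (k : ℕ) : (σ ^ k) a = a := by
    rw [RingAut.coe_pow]
    exact Function.iterate_fixed ha k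
  simp only [twistedDiagonal_apply, fixed, smul_one_eq_diagonal]

lemma twistedDiagonal_map {σ τ : RingAut K} (hcomm : Commute σ τ) (a : K) :
    (twistedDiagonal n σ a).map τ = twistedDiagonal n σ (τ a) := by
  rw [twistedDiagonal_apply, twistedDiagonal_apply, diagonal_map (map_zero τ)]
  exact congrArg diagonal
    (funext fun i => (DFunLike.congr_fun (hcomm.pow_left (i : ℕ)).eq a).symm)

end TwistedDiagonal

section CyclicRep

variable {K : Type} [Field K] {n : ℕ} {σ : RingAut K} {γ : K}

lemma Gam_mul_twistedDiagonal (hσn : σ ^ n = 1) (a : K) :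
    Gam n γ * twistedDiagonal n σ (σ a) = twistedDiagonal n σ a * Gam n γ := by
  ext i j
  rw [twistedDiagonal_apply, twistedDiagonal_apply, mul_diagonal, diagonal_mul,
    ← RingAut.mul_apply, ← pow_succ, mul_comm]
  simp only [Gam, of_apply]
  split_ifs with subdiagonal corner
  · rw [subdiagonal]
  · rw [corner.1, corner.2, Nat.sub_add_cancel (by omega), hσn, pow_zero]
  · simp

lemma isCyclicGenerator_Gam [NeZero n] (hσn : σ ^ n = 1) (hσγ : σ γ = γ) :
    IsCyclicGenerator (twistedDiagonal n σ) σ γ n (Gam n γ) where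
  mul_map := Gam_mul_twistedDiagonal hσn
  pow_eq := by rw [Gam_pow_self, twistedDiagonal_of_apply_eq_self n hσγ]

lemma mem_cyclicSubring_iff [NeZero n] (h : IsCyclicGenerator (twistedDiagonal n σ) σ γ n (Gam n γ))
    {M : Matrix (Fin n) (Fin n) K} : M ∈ h.cyclicSubring ↔ M ∈ cyclicRep n σ γ :=
  exists_congr fun _ => eq_comm

end CyclicRep

section AlphaTheta

variable {K : Type} [Field K] {n : ℕ} {θ : K} {τ : RingAut K}

lemma alphaTheta_inj {X Y U V : Matrix (Fin n) (Fin n) K} :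
    alphaTheta n θ τ X Y = alphaTheta n θ τ U V ↔ X = U ∧ Y = V := by
  constructor
  · intro h
    obtain ⟨hX, -, hY, -⟩ := fromBlocks_inj.mp h
    exact ⟨hX, hY⟩
  · rintro ⟨rfl, rfl⟩
    rfl

lemma alphaTheta_eq_zero_iff {X Y : Matrix (Fin n) (Fin n) K} :
    alphaTheta n θ τ X Y = 0 ↔ X = 0 ∧ Y = 0 := by
  have zero : alphaTheta n θ τ 0 0 = 0 := by simp [alphaTheta, Matrix.map_zero]
  rw [← zero, alphaTheta_inj]

lemma alphaTheta_one_zero : alphaTheta n θ τ 1 0 = 1 := by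
  simp [alphaTheta, Matrix.map_zero, Matrix.map_one]

lemma alphaTheta_mul (hτ2 : τ ^ 2 = 1) (hτθ : τ θ = θ) (X Y U V : Matrix (Fin n) (Fin n) K) :
    alphaTheta n θ τ X Y * alphaTheta n θ τ U V =
      alphaTheta n θ τ (X * U + θ • (Y.map τ * V)) (Y * U + X.map τ * V) := by
  have map_map_self (M : Matrix (Fin n) (Fin n) K) : (M.map τ).map τ = M := by
    ext i j
    exact DFunLike.congr_fun ((pow_two τ).symm.trans hτ2) (M i j)
  have map_smul_self (M : Matrix (Fin n) (Fin n) K) : (θ • M).map τ = θ • M.map τ :=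
    Matrix.map_smul τ θ (fun a => by simp [hτθ]) M
  simp only [alphaTheta, fromBlocks_multiply, Matrix.map_add τ (map_add τ), Matrix.map_mul,
    map_smul_self, map_map_self, Matrix.mul_smul, Matrix.smul_mul, smul_add]
  congr 1 <;> rw [add_comm]

lemma alphaTheta_mul_eq_one_iff (hτ2 : τ ^ 2 = 1) (hτθ : τ θ = θ)
    {X Y U V : Matrix (Fin n) (Fin n) K} :
    alphaTheta n θ τ X Y * alphaTheta n θ τ U V = 1 ↔
      X * U + θ • (Y.map τ * V) = 1 ∧ Y * U + X.map τ * V = 0 := by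
  rw [alphaTheta_mul hτ2 hτθ, ← alphaTheta_one_zero (θ := θ) (τ := τ), alphaTheta_inj]

theorem forall_exists_alphaTheta_mul_eq_one_iff [NeZero n] (hτ2 : τ ^ 2 = 1) (hτθ : τ θ = θ)
    {D : Subring (Matrix (Fin n) (Fin n) K)} (hD : ∀ X : D, X ≠ 0 → IsUnit X)
    (hτ : ∀ X ∈ D, X.map τ ∈ D) (hθ : θ • 1 ∈ D) :
    (∀ X ∈ D, ∀ Y ∈ D, alphaTheta n θ τ X Y ≠ 0 →
        ∃ U ∈ D, ∃ V ∈ D, alphaTheta n θ τ X Y * alphaTheta n θ τ U V = 1) ↔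
      ∀ Z ∈ D, Z * Z.map τ ≠ θ • 1 := by
  let : DivisionRing D :=
    DivisionRing.ofIsUnitOrEqZero fun X => (em (X = 0)).symm.imp_left (hD X)
  let τD : D →+* D := (τ : K →+* K).mapMatrix.restrict D D hτ
  have core := forall_exists_mul_add_eq_one_iff τD ⟨θ • 1, hθ⟩
  simp only [alphaTheta_mul_eq_one_iff hτ2 hτθ, ne_eq, alphaTheta_eq_zero_iff]
  simp only [Subtype.forall, Subtype.exists, Subtype.ext_iff, τD, Subring.coe_add, Subring.coe_mul,
    Subring.coe_zero, Subring.coe_one, ne_eq, exists_prop, smul_one_mul] at core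
  exact core

end AlphaTheta

/-- assuming the cyclic algebra is division, the following are equivalent:
(i) every nonzero element `M` of `A` has a two-sided inverse inside `A`
(`A` is a division algebra); (ii) `Z·τ(Z) ≠ θ·Iₙ` for every `Z ∈ D`. -/
theorem stmt3 {K : Type} [Field K] (n : ℕ) (hn : 1 ≤ n) (σ τ : RingAut K)
    (hcomm : σ * τ = τ * σ) (hσn : σ ^ n = 1) (hτ2 : τ ^ 2 = 1)
    (γ θ : K) (hσγ : σ γ = γ) (hτγ : τ γ = γ) (hσθ : σ θ = θ) (hτθ : τ θ = θ)
    (hdiv : ∀ M ∈ cyclicRep n σ γ, M ≠ 0 → IsUnit M) :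
    (∀ M ∈ iterCode n σ τ γ θ, M ≠ 0 →
        ∃ N ∈ iterCode n σ τ γ θ, M * N = 1 ∧ N * M = 1) ↔
      (∀ Z ∈ cyclicRep n σ γ,
        Z * Z.map ⇑τ ≠ θ • (1 : Matrix (Fin n) (Fin n) K)) := by
  have : NeZero n := ⟨Nat.one_le_iff_ne_zero.mp hn⟩
  have hΓ := isCyclicGenerator_Gam hσn hσγ
  have := hΓ.isArtinianRing_cyclicSubring
  have units (X : hΓ.cyclicSubring) (hX : X ≠ 0) : IsUnit X :=
    isUnit_of_map_of_injective hΓ.cyclicSubring.subtype_injective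
      (hdiv X ((mem_cyclicSubring_iff hΓ).mp X.2) (Subtype.coe_ne_coe.mpr hX))
  have τ_mem (X) (hX : X ∈ hΓ.cyclicSubring) : X.map τ ∈ hΓ.cyclicSubring :=
    hΓ.apply_mem_cyclicSubring (T := (τ : K →+* K).mapMatrix) (twistedDiagonal_map n hcomm)
      (Gam_map hτγ) hX
  have θ_mem : θ • 1 ∈ hΓ.cyclicSubring :=
    twistedDiagonal_of_apply_eq_self n hσθ ▸ hΓ.map_mem_cyclicSubring θ
  have key := forall_exists_alphaTheta_mul_eq_one_iff hτ2 hτθ units τ_mem θ_mem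
  simp only [mem_cyclicSubring_iff] at key
  refine Iff.trans ⟨fun H X hX Y hY hXY => ?_, ?_⟩ key
  · obtain ⟨_, ⟨U, hU, V, hV, rfl⟩, hUV, -⟩ := H _ ⟨X, hX, Y, hY, rfl⟩ hXY
    exact ⟨U, hU, V, hV, hUV⟩
  · rintro H _ ⟨X, hX, Y, hY, rfl⟩ hXY
    obtain ⟨U, hU, V, hV, hUV⟩ := H X hX Y hY hXY
    exact ⟨_, ⟨U, hU, V, hV, rfl⟩, hUV, mul_eq_one_comm.mp hUV⟩
end
end

section
/- Let F be a number field with ring of integers O_F, and let a ∈ O_F be a nonzero element such that the ideal a·O_F is prime. Let γ, θ ∈ O_F be such that neither θ nor γ is a square modulo a·O_F (for every b ∈ O_F, a divides neither b² − θ nor b² − γ). Suppose moreover that the quadratic form ⟨γ, −θ⟩ is anisotropic over K = F(√a), i.e., for all x₀, x₁, y₀, y₁ ∈ F, if γ·(x₀² + a·x₁²) = θ·(y₀² + a·y₁²) and γ·x₀·x₁ = θ·y₀·y₁, then x₀ = x₁ = y₀ = y₁ = 0. Then for every z ∈ ℍ[F,a,γ], z·σ(z) ≠ θ; consequently every nonzero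 element of the iterated code α_θ(Q,Q) has nonzero determinant. -/
open NumberField Quaternion

noncomputable section

/-- The automorphism `σ` of the quaternion algebra `ℍ[F, a, γ]` given by
`σ(x₀ + x₁i + x₂j + x₃k) = x₀ − x₁i + x₂j − x₃k`. -/
def qsigma {F : Type} [Field F] (a γ : F) (z : ℍ[F, a, γ]) : ℍ[F, a, γ] :=
  ⟨z.re, -z.imI, z.imJ, -z.imK⟩

/-!
Comparing coefficients, `z * σ z` is a scalar only if `z = x₀ + x₁i + x₃k` or `z = x₂j`. In the
second case `θ = γ x₂²`, so `⟨γ, -θ⟩` is isotropic, already over `F`. In the first case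
`θ = x₀² - a x₁² + aγ x₃²`, so `⟨1, -θ⟩ ⊥ -a⟨1, -γ⟩` is isotropic over `F`, hence over `𝓞 F`.
Reducing modulo `a`, where `⟨1, -θ⟩` is anisotropic, and then dividing by `a` and reducing
`⟨1, -γ⟩`, shows that every isotropic vector is divisible by `a`; infinite descent makes it zero.
-/

section Quaternion

variable {F : Type} [Field F] {a γ : F}

theorem mul_qsigma (z : ℍ[F,a,γ]) :
    z * qsigma a γ z =
      ⟨z.re ^ 2 - a * z.imI ^ 2 + γ * z.imJ ^ 2 + a * γ * z.imK ^ 2, 2 * γ * z.imJ * z.imK,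
        2 * z.re * z.imJ, 2 * z.imI * z.imJ⟩ := by
  ext <;> simp [qsigma] <;> ring

theorem mul_qsigma_eq_coe_iff [NeZero (2 : F)] (hγ : γ ≠ 0) (z : ℍ[F,a,γ]) (t : F) :
    z * qsigma a γ z = (t : ℍ[F,a,γ]) ↔
      (z.imJ = 0 ∧ z.re ^ 2 - a * z.imI ^ 2 + a * γ * z.imK ^ 2 = t) ∨
        (z.re = 0 ∧ z.imI = 0 ∧ z.imK = 0 ∧ γ * z.imJ ^ 2 = t) := by
  have h2 : (2 : F) ≠ 0 := two_ne_zero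
  simp only [mul_qsigma, QuaternionAlgebra.ext_iff, QuaternionAlgebra.re_coe,
    QuaternionAlgebra.imI_coe, QuaternionAlgebra.imJ_coe, QuaternionAlgebra.imK_coe]
  by_cases hJ : z.imJ = 0 <;> grind

end Quaternion

section QuadraticForm

variable {R : Type*} [CommRing R]

theorem mem_and_mem_of_sq_sub_mul_sq_mem {I : Ideal R} (hI : I.IsMaximal) {c : R}
    (hc : ∀ b : R, b ^ 2 - c ∉ I) {x y : R} (h : x ^ 2 - c * y ^ 2 ∈ I) : x ∈ I ∧ y ∈ I := by
  have hy : y ∈ I := by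
    by_contra hy
    obtain ⟨w, i, hi, hwy⟩ := hI.exists_inv hy
    refine hc (x * w) ?_
    have hsub : (x * w) ^ 2 - c = w ^ 2 * (x ^ 2 - c * y ^ 2) - c * (1 + w * y) * i := by
      linear_combination c * (1 + w * y) * hwy
    rw [hsub]
    exact I.sub_mem (I.mul_mem_left _ h) (I.mul_mem_left _ hi)
  have hx : x ^ 2 ∈ I :=
    (I.sub_mem_iff_left (I.mul_mem_left c (I.pow_mem_of_mem hy 2 two_pos))).mp h
  exact ⟨hI.isPrime.mem_of_pow_mem 2 hx, hy⟩

theorem dvd_and_dvd_of_dvd_sq_sub_mul_sq {a c : R} (ha : (Ideal.span {a}).IsMaximal)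
    (hc : ∀ b : R, ¬a ∣ b ^ 2 - c) {x y : R} (h : a ∣ x ^ 2 - c * y ^ 2) : a ∣ x ∧ a ∣ y := by
  simp only [← Ideal.mem_span_singleton] at hc h ⊢
  exact mem_and_mem_of_sq_sub_mul_sq_mem ha hc h

theorem anisotropic_weightedSumSquares_algebraMap {F ι : Type*} [Field F] [Algebra R F]
    [IsFractionRing R F] [Fintype ι] {w : ι → R}
    (hw : (QuadraticMap.weightedSumSquares R w).Anisotropic) :
    (QuadraticMap.weightedSumSquares F (fun i ↦ algebraMap R F (w i))).Anisotropic := by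
  intro x hx
  obtain ⟨d, hd⟩ := IsLocalization.exist_integer_multiples_of_finite (nonZeroDivisors R) x
  choose y hy using hd
  have hy_mul (i : ι) : algebraMap R F (y i) = algebraMap R F d * x i :=
    (hy i).trans (Algebra.smul_def _ _)
  have hy₀ : y = 0 := by
    refine hw y (IsFractionRing.injective R F ?_)
    calc algebraMap R F (QuadraticMap.weightedSumSquares R w y)
        = QuadraticMap.weightedSumSquares F (fun i ↦ algebraMap R F (w i))
            (algebraMap R F d • x) := by
          simp only [QuadraticMap.weightedSumSquares_apply, map_sum, map_mul, smul_eq_mul, hy_mul,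
            Pi.smul_apply]
      _ = algebraMap R F 0 := by rw [QuadraticMap.map_smul, hx, smul_zero, map_zero]
  have hd₀ : algebraMap R F d ≠ 0 := (IsLocalization.map_units F d).ne_zero
  ext i
  simpa [hy₀, hd₀] using hy_mul i

variable [IsDomain R] [WfDvdMonoid R]

theorem anisotropic_of_forall_dvd {ι : Type*} (Q : QuadraticForm R (ι → R)) {a : R}
    (ha₀ : a ≠ 0) (ha : ¬IsUnit a) (hQ : ∀ x, Q x = 0 → ∀ i, a ∣ x i) : Q.Anisotropic := by
  have pow_dvd (n : ℕ) : ∀ x, Q x = 0 → ∀ i, a ^ n ∣ x i := by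
    induction n with
    | zero => simp
    | succ n ih =>
      intro x hx i
      choose y hy using hQ x hx
      obtain rfl : x = a • y := funext hy
      have hQy : Q y = 0 := by simpa [QuadraticMap.map_smul, ha₀] using hx
      rw [pow_succ']
      exact mul_dvd_mul_left a (ih y hQy i)
  intro x hx
  ext i
  by_contra hxi
  obtain ⟨n, hn⟩ := FiniteMultiplicity.of_not_isUnit ha hxi
  exact hn (pow_dvd (n + 1) x hx i)

theorem anisotropic_weightedSumSquares_of_isMaximal_span {a γ θ : R} (ha₀ : a ≠ 0)
    (ha : (Ideal.span {a}).IsMaximal) (hθ : ∀ b : R, ¬a ∣ b ^ 2 - θ)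
    (hγ : ∀ b : R, ¬a ∣ b ^ 2 - γ) :
    (QuadraticMap.weightedSumSquares R ![1, -θ, -a, a * γ]).Anisotropic := by
  refine anisotropic_of_forall_dvd _ ha₀ (mt Ideal.span_singleton_eq_top.mpr ha.ne_top) ?_
  intro x hx
  have hblocks : x 0 ^ 2 - θ * x 1 ^ 2 = a * (x 2 ^ 2 - γ * x 3 ^ 2) := by
    simp only [QuadraticMap.weightedSumSquares_apply, smul_eq_mul, Fin.sum_univ_four,
      Matrix.cons_val] at hx
    linear_combination hx
  obtain ⟨⟨y₀, hy₀⟩, ⟨y₁, hy₁⟩⟩ := dvd_and_dvd_of_dvd_sq_sub_mul_sq ha hθ ⟨_, hblocks⟩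
  have hquot : x 2 ^ 2 - γ * x 3 ^ 2 = a * (y₀ ^ 2 - θ * y₁ ^ 2) := by
    apply mul_left_cancel₀ ha₀
    rw [← hblocks, hy₀, hy₁]
    ring
  obtain ⟨h₂, h₃⟩ := dvd_and_dvd_of_dvd_sq_sub_mul_sq ha hγ ⟨_, hquot⟩
  exact Fin.forall_fin_succ.mpr
    ⟨⟨y₀, hy₀⟩, by simpa [Fin.forall_fin_succ] using ⟨⟨y₁, hy₁⟩, h₂, h₃⟩⟩

end QuadraticForm

theorem stmt11_general {R : Type*} [CommRing R] [IsDomain R] [WfDvdMonoid R] (F : Type) [Field F]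
    [NeZero (2 : F)] [Algebra R F] [IsFractionRing R F] (a γ θ : R) (ha₀ : a ≠ 0)
    (ha : (Ideal.span {a}).IsMaximal)
    (hθ : ∀ b : R, ¬a ∣ b ^ 2 - θ) (hγ : ∀ b : R, ¬a ∣ b ^ 2 - γ)
    (hγθ : ∀ c : F, algebraMap R F γ * c ^ 2 ≠ algebraMap R F θ)
    (z : ℍ[F,algebraMap R F a,algebraMap R F γ]) :
    z * qsigma (algebraMap R F a) (algebraMap R F γ) z ≠
      ((algebraMap R F θ : F) : ℍ[F,algebraMap R F a,algebraMap R F γ]) := by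
  have hγ₀ : algebraMap R F γ ≠ 0 := by
    rw [map_ne_zero_iff _ (IsFractionRing.injective R F)]
    rintro rfl
    simpa using hγ 0
  rw [Ne, mul_qsigma_eq_coe_iff hγ₀, not_or]
  refine ⟨fun ⟨_, hz⟩ ↦ ?_, fun ⟨_, _, _, hz⟩ ↦ hγθ z.imJ hz⟩
  have hform := anisotropic_weightedSumSquares_algebraMap (F := F)
    (anisotropic_weightedSumSquares_of_isMaximal_span ha₀ ha hθ hγ)
  have hzero := hform ![z.re, 1, z.imI, z.imK] (by
    simp only [QuadraticMap.weightedSumSquares_apply, smul_eq_mul, Fin.sum_univ_four,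
      Matrix.cons_val, map_one, map_neg, map_mul]
    linear_combination hz)
  simpa using congrFun hzero 1

/-- for a number field `F`, if `a ∈ O_F` is nonzero and generates a prime
ideal, neither `θ` nor `γ` is a square modulo `a·O_F`, and the quadratic form `⟨γ, −θ⟩`
is anisotropic over `K = F(√a)` (expressed componentwise), then `z·σ(z) ≠ θ` for every
quaternion `z ∈ ℍ[F, a, γ]`; consequently every nonzero element of the iterated code
`α_θ(Q, Q)` has nonzero determinant. -/
theorem stmt11 (F : Type) [Field F] [NumberField F]
    (a γ θ : 𝓞 F) (ha0 : a ≠ 0)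
    (hprime : (Ideal.span ({a} : Set (𝓞 F))).IsPrime)
    (hθ : ∀ b : 𝓞 F, ¬ (a ∣ b ^ 2 - θ))
    (hγ : ∀ b : 𝓞 F, ¬ (a ∣ b ^ 2 - γ))
    (hformK : ∀ x₀ x₁ y₀ y₁ : F,
      (algebraMap (𝓞 F) F γ) * (x₀ ^ 2 + (algebraMap (𝓞 F) F a) * x₁ ^ 2) =
          (algebraMap (𝓞 F) F θ) * (y₀ ^ 2 + (algebraMap (𝓞 F) F a) * y₁ ^ 2) →
        (algebraMap (𝓞 F) F γ) * x₀ * x₁ = (algebraMap (𝓞 F) F θ) * y₀ * y₁ →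
        x₀ = 0 ∧ x₁ = 0 ∧ y₀ = 0 ∧ y₁ = 0) :
    ∀ z : ℍ[F, algebraMap (𝓞 F) F a, algebraMap (𝓞 F) F γ],
      z * qsigma (algebraMap (𝓞 F) F a) (algebraMap (𝓞 F) F γ) z ≠
        ((algebraMap (𝓞 F) F θ : F) :
          ℍ[F, algebraMap (𝓞 F) F a, algebraMap (𝓞 F) F γ]) := by
  exact stmt11_general F a γ θ ha0 (hprime.isMaximal (by simpa using ha0)) hθ hγ fun c hc ↦
    one_ne_zero (hformK c 0 1 0 (by linear_combination hc) (by ring)).2.2.1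
end
end
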